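/- Let $\{v_n\}$ be a $1/2$-uniformly distributed sequence in $\mathbb{T}^d$, $d \geq 2$, and fix a distance $\frac{1}{100} \leq t < \frac12$. Then for every $\epsilon > 0$ there exists $C_\epsilon > 0$ such that $\#\{(n,m) \in [1,N]^2 : \|v_n - v_m\| = t\} \leq C_\epsilon N^{2 - \frac{2}{d+1} + \epsilon}$ for all $N$. -/

import Mathlib

open Finset MeasureTheory

/-- Euclidean norm of an integer vector `k ∈ ℤ^d`. -/
noncomputable def intNorm {d : ℕ} (k : Fin d → ℤ) : ℝ :=
  Real.sqrt (∑ i, ((k i : ℝ)) ^ 2)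

/-- The toral (Euclidean) norm on `𝕋^d = (ℝ/ℤ)^d`: the distance to the lattice `ℤ^d`. -/
noncomputable def torusNorm {d : ℕ} (x : Fin d → AddCircle (1:ℝ)) : ℝ :=
  Real.sqrt (∑ i, ‖x i‖ ^ 2)

/-- A sequence in `𝕋^d` is `γ`-uniformly distributed. -/
def IsGammaUDTorus {d : ℕ} (γ : ℝ) (v : ℕ → Fin d → AddCircle (1:ℝ)) : Prop :=
  ∀ ε : ℝ, 0 < ε → ∃ C : ℝ, 0 < C ∧ ∀ k : Fin d → ℤ, k ≠ 0 → ∀ N : ℕ, 1 ≤ N →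
    ‖(N : ℂ)⁻¹ * ∑ n ∈ Finset.range N, ∏ i, fourier (k i) (v n i)‖
      ≤ C * intNorm k ^ ε * (N : ℝ) ^ (-γ)

/-!
Write `D` for the Dirichlet kernel of the frequency box `{0, …, M - 1}^d`. It has size `≍ M^d` on
the ball of radius `≍ 1/M`, so every pair with `v n - v m` in an annulus of half-width `w ≍ 1/M`
contributes `≳ M^d` to the integral of `∑ |D (y - (v n - v m))|²` over a slightly thicker annulus
`A`. Expanded in characters, the sum over all pairs is `∑ |S (j - l)|² e_{j - l}(y)`, where `S` is
the Weyl sum and `j`, `l` run over the box. The diagonal `j = l` contributes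
`M^d |A| N² ≍ M^d w N²`. Off the diagonal, uniform distribution gives `|S|² ≲ N^(2 - 2γ)` up to a
factor `M^ε`, and Cauchy–Schwarz on `A` together with Parseval's identity in `l` bounds the
contribution by `M^d √(|A| M^d) N^(2 - 2γ) ≍ M^d w^(-(d - 1)/2) N^(2 - 2γ)`. The two terms balance
at `w = N^(-4γ/(d + 1))`, and the pairs at distance exactly `t` lie in every annulus of radius `t`.
-/

open UnitAddTorus
open scoped ComplexConjugate

section ExponentialSums

variable {ι : Type*} [Fintype ι]

theorem mFourier_sub_apply (k : ι → ℤ) (x y : UnitAddTorus ι) :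
    mFourier k (x - y) = mFourier k x * conj (mFourier k y) := by
  rw [← mFourier_neg]
  simp only [mFourier, ContinuousMap.coe_mk, ← Finset.prod_mul_distrib]
  refine Finset.prod_congr rfl fun i _ => ?_
  simp only [fourier_apply, Pi.sub_apply, Pi.neg_apply]
  rw [neg_smul, smul_sub, sub_eq_add_neg, AddCircle.toCircle_add, Circle.coe_mul]

theorem integral_mFourier_of_ne_zero {k : ι → ℤ} (hk : k ≠ 0) :
    ∫ x : UnitAddTorus ι, mFourier k x = 0 := by
  obtain ⟨i, hi⟩ := Function.ne_iff.1 hk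
  simp only [mFourier, ContinuousMap.coe_mk]
  rw [integral_fintype_prod_volume_eq_prod fun i (x : UnitAddCircle) => (fourier (k i) x : ℂ)]
  exact Finset.prod_eq_zero (mem_univ i)
    (integral_eq_zero_of_add_right_eq_neg (fourier_add_half_inv_index hi one_pos))

theorem norm_sq_sum_mFourier {α : Type*} (s : Finset α) (c : α → ℂ) (f : α → ι → ℤ)
    (x : UnitAddTorus ι) :
    ((‖∑ j ∈ s, c j * mFourier (f j) x‖ ^ 2 : ℝ) : ℂ) =
      ∑ j ∈ s, ∑ l ∈ s, c j * conj (c l) * mFourier (f j - f l) x := by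
  rw [Complex.ofReal_pow, ← Complex.mul_conj', map_sum, Finset.sum_mul_sum]
  refine Finset.sum_congr rfl fun j _ => Finset.sum_congr rfl fun l _ => ?_
  rw [map_mul, sub_eq_add_neg, mFourier_add, mFourier_neg]
  ring

theorem integral_norm_sq_sum_mFourier {α : Type*} (s : Finset α) (c : α → ℂ) {f : α → ι → ℤ}
    (hf : Function.Injective f) :
    ∫ x : UnitAddTorus ι, ‖∑ j ∈ s, c j * mFourier (f j) x‖ ^ 2 = ∑ j ∈ s, ‖c j‖ ^ 2 := by
  classical
  have orthogonality (j l : α) :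
      ∫ x : UnitAddTorus ι, mFourier (f j - f l) x = if j = l then 1 else 0 := by
    split_ifs with h
    · simp [h, mFourier_zero, Measure.real, volume_pi, Measure.pi_univ]
    · exact integral_mFourier_of_ne_zero (sub_ne_zero.2 (hf.ne h))
  have integrable (k : ι → ℤ) : Integrable fun x : UnitAddTorus ι => mFourier k x :=
    (mFourier k).continuous.integrable_of_hasCompactSupport (.of_compactSpace _)
  apply Complex.ofReal_injective
  rw [← integral_complex_ofReal]
  simp_rw [norm_sq_sum_mFourier]
  rw [integral_finsetSum _ fun j _ => integrable_finsetSum _ fun l _ => (integrable _).const_mul _]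
  push_cast
  refine Finset.sum_congr rfl fun j hj => ?_
  rw [integral_finsetSum _ fun l _ => (integrable _).const_mul _]
  simp_rw [integral_const_mul, orthogonality]
  simp [hj, Complex.mul_conj']

theorem integral_norm_le_sqrt_mul_integral_norm_sq {Ω E : Type*} [MeasurableSpace Ω]
    [NormedAddCommGroup E] {μ : Measure Ω} [IsFiniteMeasure μ] {f : Ω → E} (hf : MemLp f 2 μ) :
    ∫ x, ‖f x‖ ∂μ ≤ √(μ.real Set.univ * ∫ x, ‖f x‖ ^ 2 ∂μ) := by
  have holder := integral_mul_le_Lp_mul_Lq_of_nonneg (μ := μ) Real.HolderConjugate.two_two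
    (f := fun _ => 1) (g := fun x => ‖f x‖) (ae_of_all _ fun _ => zero_le_one)
    (ae_of_all _ fun x => norm_nonneg (f x)) (memLp_const 1) (by simpa using hf.norm)
  rw [Real.sqrt_eq_rpow, Real.mul_rpow measureReal_nonneg (integral_nonneg fun x => by positivity)]
  simpa using holder

theorem setIntegral_norm_sum_mFourier_le {α : Type*} (s : Finset α) (c : α → ℂ) {f : α → ι → ℤ}
    (hf : Function.Injective f) (A : Set (UnitAddTorus ι)) :
    ∫ x in A, ‖∑ j ∈ s, c j * mFourier (f j) x‖ ≤ √(volume.real A * ∑ j ∈ s, ‖c j‖ ^ 2) := by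
  have memLp : MemLp (fun x => ∑ j ∈ s, c j * mFourier (f j) x) 2 :=
    Continuous.memLp_of_hasCompactSupport (by fun_prop) (.of_compactSpace _)
  refine (integral_norm_le_sqrt_mul_integral_norm_sq (memLp.restrict A)).trans ?_
  rw [measureReal_restrict_apply_univ, ← integral_norm_sq_sum_mFourier s c hf]
  gcongr
  · exact ae_of_all _ fun x => by positivity
  · exact memLp.integrable_norm_pow two_ne_zero
  · exact Measure.restrict_le_self

/-- The Dirichlet kernel on `𝕋^ι` with spectrum the finite set of frequencies `B`. -/
noncomputable def dirichletKernel (B : Finset (ι → ℤ)) (x : UnitAddTorus ι) : ℂ :=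
  ∑ k ∈ B, mFourier k x

/-- The exponential (Weyl) sum at frequency `k` of the points `v n`, `n ∈ s`, of `𝕋^ι`; its decay
measures the equidistribution of these points. -/
noncomputable def weylSum {α : Type*} (s : Finset α) (v : α → UnitAddTorus ι) (k : ι → ℤ) : ℂ :=
  ∑ n ∈ s, mFourier k (v n)

theorem continuous_dirichletKernel (B : Finset (ι → ℤ)) : Continuous (dirichletKernel B) := by
  unfold dirichletKernel
  fun_prop

variable {α : Type*} (s : Finset α) (v : α → UnitAddTorus ι)

theorem sum_mFourier_sub_differences (k : ι → ℤ) (y : UnitAddTorus ι) :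
    ∑ p ∈ s ×ˢ s, mFourier k (y - (v p.1 - v p.2)) = (‖weylSum s v k‖ ^ 2 : ℂ) * mFourier k y := by
  rw [← Complex.conj_mul', weylSum, map_sum, Finset.sum_mul_sum, ← Finset.sum_product',
    Finset.sum_mul]
  refine Finset.sum_congr rfl fun p _ => ?_
  rw [mFourier_sub_apply, mFourier_sub_apply, map_mul, Complex.conj_conj]
  ring

theorem sum_norm_sq_dirichletKernel_sub_differences (B : Finset (ι → ℤ)) (y : UnitAddTorus ι) :
    ((∑ p ∈ s ×ˢ s, ‖dirichletKernel B (y - (v p.1 - v p.2))‖ ^ 2 : ℝ) : ℂ) =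
      ∑ j ∈ B, ∑ l ∈ B, (‖weylSum s v (j - l)‖ ^ 2 : ℂ) * mFourier (j - l) y := by
  have norm_sq_kernel (x : UnitAddTorus ι) : ((‖dirichletKernel B x‖ ^ 2 : ℝ) : ℂ) =
      ∑ j ∈ B, ∑ l ∈ B, mFourier (j - l) x := by
    simpa [dirichletKernel] using norm_sq_sum_mFourier B 1 id x
  rw [Complex.ofReal_sum, Finset.sum_congr rfl fun p _ => norm_sq_kernel _, Finset.sum_comm]
  refine Finset.sum_congr rfl fun j _ => ?_
  rw [Finset.sum_comm]
  exact Finset.sum_congr rfl fun l _ => sum_mFourier_sub_differences s v _ y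

theorem sum_norm_sq_dirichletKernel_sub_differences_le (B : Finset (ι → ℤ))
    (y : UnitAddTorus ι) :
    ∑ p ∈ s ×ˢ s, ‖dirichletKernel B (y - (v p.1 - v p.2))‖ ^ 2 ≤ #B * #s ^ 2 +
      ∑ j ∈ B, ‖∑ l ∈ B.erase j, (‖weylSum s v (j - l)‖ ^ 2 : ℂ) * mFourier (j - l) y‖ := by
  have diagonal (j : ι → ℤ) : ‖(‖weylSum s v (j - j)‖ ^ 2 : ℂ) * mFourier (j - j) y‖ = #s ^ 2 := by
    simp [weylSum, mFourier_zero]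
  rw [← nsmul_eq_mul, ← Finset.sum_const, ← Finset.sum_add_distrib]
  refine (Real.le_norm_self _).trans ?_
  rw [← Complex.norm_real, sum_norm_sq_dirichletKernel_sub_differences]
  refine norm_sum_le_of_le _ fun j hj => ?_
  rw [← Finset.add_sum_erase _ _ hj, ← diagonal j]
  exact norm_add_le _ _

theorem setIntegral_norm_sum_norm_sq_weylSum_mul_mFourier_le {B : Finset (ι → ℤ)} (j : ι → ℤ)
    (A : Set (UnitAddTorus ι)) {L : ℝ} (hL : 0 ≤ L) (hB : ∀ l ∈ B, ‖weylSum s v (j - l)‖ ^ 2 ≤ L) :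
    ∫ y in A, ‖∑ l ∈ B, (‖weylSum s v (j - l)‖ ^ 2 : ℂ) * mFourier (j - l) y‖ ≤
      √(volume.real A * #B) * L := by
  refine (setIntegral_norm_sum_mFourier_le _ _ sub_right_injective A).trans ?_
  rw [← Real.sqrt_sq hL, ← Real.sqrt_mul (by positivity), mul_assoc, ← nsmul_eq_mul]
  gcongr
  refine Finset.sum_le_card_nsmul _ _ _ fun l hl => ?_
  rw [← Complex.ofReal_pow, Complex.norm_of_nonneg (by positivity)]
  gcongr
  exact hB l hl

/-- Only the off-diagonal frequencies `j ≠ l` of the kernel need cancellation in the Weyl sums; by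
Cauchy–Schwarz, integrating them over `A` gains the factor `√|A|`. -/
theorem setIntegral_sum_norm_sq_dirichletKernel_le (B : Finset (ι → ℤ)) (A : Set (UnitAddTorus ι))
    {L : ℝ} (hL : 0 ≤ L) (hB : ∀ j ∈ B, ∀ l ∈ B, j ≠ l → ‖weylSum s v (j - l)‖ ^ 2 ≤ L) :
    ∫ y in A, ∑ p ∈ s ×ˢ s, ‖dirichletKernel B (y - (v p.1 - v p.2))‖ ^ 2 ≤
      #B * (volume.real A * #s ^ 2 + √(volume.real A * #B) * L) := by
  classical
  set offDiagonal : (ι → ℤ) → UnitAddTorus ι → ℂ := fun j y =>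
    ∑ l ∈ B.erase j, (‖weylSum s v (j - l)‖ ^ 2 : ℂ) * mFourier (j - l) y
  have integral_offDiagonal_le (j) (hj : j ∈ B) :
      ∫ y in A, ‖offDiagonal j y‖ ≤ √(volume.real A * #B) * L := by
    refine (setIntegral_norm_sum_norm_sq_weylSum_mul_mFourier_le s v j A hL fun l hl => ?_).trans ?_
    · exact hB j hj l (Finset.mem_of_mem_erase hl) (Finset.ne_of_mem_erase hl).symm
    · gcongr
      exact Finset.erase_subset _ _
  have integrable {F : UnitAddTorus ι → ℝ} (hF : Continuous F) : IntegrableOn F A :=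
    (hF.integrable_of_hasCompactSupport (.of_compactSpace _)).integrableOn
  have continuous_kernel := continuous_dirichletKernel B
  calc _ ≤ ∫ y in A, (#B * #s ^ 2 + ∑ j ∈ B, ‖offDiagonal j y‖) :=
        integral_mono (integrable (by fun_prop)) (integrable (by fun_prop))
          (sum_norm_sq_dirichletKernel_sub_differences_le s v B)
    _ = #B * (volume.real A * #s ^ 2) + ∑ j ∈ B, ∫ y in A, ‖offDiagonal j y‖ := by
        rw [integral_add (integrable (by fun_prop)) (integrable (by fun_prop)), setIntegral_const,
          integral_finsetSum _ fun j _ => integrable (by fun_prop), smul_eq_mul, mul_left_comm]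
    _ ≤ #B * (volume.real A * #s ^ 2) + ∑ _j ∈ B, √(volume.real A * #B) * L := by
        gcongr with j hj
        exact integral_offDiagonal_le j hj
    _ = _ := by
        rw [Finset.sum_const, nsmul_eq_mul, mul_add]

end ExponentialSums

section FrequencyBox

theorem half_le_re_fourier {k : ℤ} {x : UnitAddCircle} (hx : |(k : ℝ)| * ‖x‖ ≤ 1 / 6) :
    1 / 2 ≤ (fourier k x : ℂ).re := by
  obtain ⟨z, hz, rfl⟩ : ∃ z ∈ Set.Icc (-(1 / 2) : ℝ) (-(1 / 2) + 1), (z : UnitAddCircle) = x := by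
    have := Set.mem_univ x
    rwa [← AddCircle.coe_image_Icc_eq 1 (-(1 / 2))] at this
  have abs_z : |z| ≤ |(1 : ℝ)| / 2 := by
    rw [abs_one, abs_le]
    constructor <;> linarith [hz.1, hz.2]
  rw [(AddCircle.norm_coe_eq_abs_iff 1 one_ne_zero).2 abs_z] at hx
  have angle_le : |2 * Real.pi * k * z| ≤ Real.pi / 3 := by
    rw [mul_assoc, abs_mul, abs_mul _ z, abs_of_pos Real.two_pi_pos]
    nlinarith [Real.pi_pos]
  have fourier_eq : (fourier k (z : UnitAddCircle) : ℂ) =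
      Complex.exp ((2 * Real.pi * k * z : ℝ) * Complex.I) := by
    rw [fourier_coe_apply]
    push_cast
    ring_nf
  rw [fourier_eq, Complex.exp_ofReal_mul_I_re, ← Real.cos_pi_div_three, ← Real.cos_abs (_ * z)]
  exact Real.cos_le_cos_of_nonneg_of_le_pi (abs_nonneg _) (by linarith [Real.pi_pos]) angle_le

theorem half_le_norm_sum_fourier {M : ℕ} {x : UnitAddCircle} (hx : M * ‖x‖ ≤ 1 / 6) :
    (M / 2 : ℝ) ≤ ‖∑ k ∈ Ico (0 : ℤ) M, (fourier k x : ℂ)‖ := by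
  refine le_trans ?_ (Complex.re_le_norm _)
  rw [Complex.re_sum]
  calc (M / 2 : ℝ) = ∑ _k ∈ Ico (0 : ℤ) M, (1 / 2 : ℝ) := by simp [div_eq_mul_inv]
    _ ≤ _ := Finset.sum_le_sum fun k hk => half_le_re_fourier <| hx.trans' <| by
        obtain ⟨hk0, hkM⟩ := Finset.mem_Ico.1 hk
        gcongr
        exact_mod_cast (abs_of_nonneg hk0).trans_le hkM.le

variable {ι : Type*} [Fintype ι]

/-- The box `{0, …, M - 1}^ι` of frequencies, spectrum of the Dirichlet kernels which detect points
of `𝕋^ι` at scale `1 / M`. -/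
noncomputable def frequencyBox (ι : Type*) [Fintype ι] [DecidableEq ι] (M : ℕ) : Finset (ι → ℤ) :=
  Fintype.piFinset fun _ => Ico 0 (M : ℤ)

theorem card_frequencyBox [DecidableEq ι] (M : ℕ) : #(frequencyBox ι M) = M ^ Fintype.card ι := by
  simp [frequencyBox]

theorem abs_sub_le_of_mem_frequencyBox [DecidableEq ι] {M : ℕ} {j l : ι → ℤ}
    (hj : j ∈ frequencyBox ι M) (hl : l ∈ frequencyBox ι M) (i : ι) : |(j - l) i| ≤ M := by
  have hji := Finset.mem_Ico.1 (Fintype.mem_piFinset.1 hj i)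
  have hli := Finset.mem_Ico.1 (Fintype.mem_piFinset.1 hl i)
  rw [Pi.sub_apply, abs_le]
  omega

theorem le_norm_dirichletKernel_frequencyBox [DecidableEq ι] {M : ℕ} {x : UnitAddTorus ι}
    (hx : M * ‖x‖ ≤ 1 / 6) :
    (M / 2 : ℝ) ^ Fintype.card ι ≤ ‖dirichletKernel (frequencyBox ι M) x‖ := by
  have kernel_eq_prod : dirichletKernel (frequencyBox ι M) x =
      ∏ i, ∑ k ∈ Ico (0 : ℤ) M, (fourier k (x i) : ℂ) := by
    rw [Finset.prod_univ_sum]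
    rfl
  rw [kernel_eq_prod, norm_prod, ← Finset.card_univ, ← Finset.prod_const]
  gcongr with i
  refine half_le_norm_sum_fourier (hx.trans' ?_)
  gcongr
  exact norm_le_pi_norm x i

theorem measureReal_closedBall_unitAddTorus {r : ℝ} (hr : 0 ≤ r) (hr' : r ≤ 1 / 2)
    (w : UnitAddTorus ι) :
    volume.real (Metric.closedBall w r) = (2 * r) ^ Fintype.card ι := by
  rw [closedBall_pi _ hr, Measure.real, volume_pi_pi]
  simp only [AddCircle.volume_closedBall, min_eq_right (by linarith : 2 * r ≤ 1)]
  rw [Finset.prod_const, Finset.card_univ, ENNReal.toReal_pow,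
    ENNReal.toReal_ofReal (by positivity)]

theorem le_setIntegral_norm_sq_dirichletKernel_frequencyBox [DecidableEq ι] {M : ℕ}
    (hM : 0 < M) {w : UnitAddTorus ι} {A : Set (UnitAddTorus ι)}
    (hA : Metric.closedBall w (1 / (6 * M)) ⊆ A) :
    (M / 12 : ℝ) ^ Fintype.card ι ≤
      ∫ y in A, ‖dirichletKernel (frequencyBox ι M) (y - w)‖ ^ 2 := by
  have hM1 : (1 : ℝ) ≤ M := by exact_mod_cast hM
  have radius_le : 1 / (6 * M : ℝ) ≤ 1 / 2 := by
    gcongr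
    linarith
  have continuous_kernel := continuous_dirichletKernel (frequencyBox ι M)
  have integrable : Integrable fun y => ‖dirichletKernel (frequencyBox ι M) (y - w)‖ ^ 2 :=
    Continuous.integrable_of_hasCompactSupport (by fun_prop) (.of_compactSpace _)
  calc (M / 12 : ℝ) ^ Fintype.card ι
      = ∫ _y in Metric.closedBall w (1 / (6 * M)), ((M / 2 : ℝ) ^ Fintype.card ι) ^ 2 := by
        rw [setIntegral_const, measureReal_closedBall_unitAddTorus (by positivity) radius_le,
          smul_eq_mul, pow_right_comm, ← mul_pow]
        congr 1
        field
    _ ≤ ∫ y in Metric.closedBall w (1 / (6 * M)),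
          ‖dirichletKernel (frequencyBox ι M) (y - w)‖ ^ 2 := by
        refine setIntegral_mono_on (integrableOn_const measure_closedBall_lt_top.ne)
          integrable.integrableOn measurableSet_closedBall fun y hy => ?_
        gcongr
        refine le_norm_dirichletKernel_frequencyBox ?_
        rw [← dist_eq_norm]
        calc M * dist y w ≤ M * (1 / (6 * M)) := by gcongr; exact hy
          _ = 1 / 6 := by field
    _ ≤ _ := setIntegral_mono_set integrable.integrableOn (ae_of_all _ fun y => by positivity)
        hA.eventuallyLE

theorem card_le_of_closedBall_sub_subset {α : Type*} (s : Finset α) (v : α → UnitAddTorus ι)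
    {M : ℕ} (hM : 0 < M) {P : Finset (α × α)} (hP : P ⊆ s ×ˢ s) {A : Set (UnitAddTorus ι)}
    (hA : ∀ p ∈ P, Metric.closedBall (v p.1 - v p.2) (1 / (6 * M)) ⊆ A) {L : ℝ} (hL : 0 ≤ L)
    (hv : ∀ k : ι → ℤ, k ≠ 0 → (∀ i, |k i| ≤ M) → ‖weylSum s v k‖ ^ 2 ≤ L) :
    (#P : ℝ) ≤ 12 ^ Fintype.card ι *
      (volume.real A * #s ^ 2 + √(volume.real A * M ^ Fintype.card ι) * L) := by
  classical
  set B := frequencyBox ι M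
  have continuous_kernel := continuous_dirichletKernel B
  have integrable (w : UnitAddTorus ι) :
      IntegrableOn (fun y => ‖dirichletKernel B (y - w)‖ ^ 2) A :=
    (Continuous.integrable_of_hasCompactSupport (by fun_prop) (.of_compactSpace _)).integrableOn
  have mass_le : #P * (M / 12 : ℝ) ^ Fintype.card ι ≤
      M ^ Fintype.card ι * (volume.real A * #s ^ 2 + √(volume.real A * M ^ Fintype.card ι) * L) :=
    calc #P * (M / 12 : ℝ) ^ Fintype.card ι
        ≤ ∑ p ∈ P, ∫ y in A, ‖dirichletKernel B (y - (v p.1 - v p.2))‖ ^ 2 := by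
          rw [← nsmul_eq_mul]
          exact Finset.card_nsmul_le_sum _ _ _ fun p hp =>
            le_setIntegral_norm_sq_dirichletKernel_frequencyBox hM (hA p hp)
      _ ≤ ∑ p ∈ s ×ˢ s, ∫ y in A, ‖dirichletKernel B (y - (v p.1 - v p.2))‖ ^ 2 :=
          Finset.sum_le_sum_of_subset_of_nonneg hP fun p _ _ =>
            integral_nonneg fun y => by positivity
      _ = ∫ y in A, ∑ p ∈ s ×ˢ s, ‖dirichletKernel B (y - (v p.1 - v p.2))‖ ^ 2 :=
          (integral_finsetSum _ fun p _ => integrable _).symm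
      _ ≤ #B * (volume.real A * #s ^ 2 + √(volume.real A * #B) * L) :=
          setIntegral_sum_norm_sq_dirichletKernel_le s v B A hL fun j hj l hl hjl =>
            hv _ (sub_ne_zero.2 hjl) (abs_sub_le_of_mem_frequencyBox hj hl)
      _ = _ := by simp only [B, card_frequencyBox, Nat.cast_pow]
  refine le_of_mul_le_mul_right (mass_le.trans_eq ?_)
    (by positivity : 0 < (M / 12 : ℝ) ^ Fintype.card ι)
  rw [div_pow]
  field

end FrequencyBox

section Annulus

theorem measureReal_closedBall_sdiff_ball_le {E : Type*} [NormedAddCommGroup E] [NormedSpace ℝ E]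
    [FiniteDimensional ℝ E] [Nontrivial E] [MeasurableSpace E] [BorelSpace E] (μ : Measure E)
    [μ.IsAddHaarMeasure] (x : E) {a b : ℝ} (ha : 0 ≤ a) (hab : a ≤ b) :
    μ.real (Metric.closedBall x b \ Metric.ball x a) ≤
      (b - a) * Module.finrank ℝ E * b ^ (Module.finrank ℝ E - 1) * μ.real (Metric.ball 0 1) := by
  have hb : 0 ≤ b := ha.trans hab
  rw [measureReal_sdiff ((Metric.ball_subset_ball hab).trans Metric.ball_subset_closedBall)
      measurableSet_ball measure_closedBall_lt_top.ne,
    ← Measure.addHaar_real_closedBall_eq_addHaar_real_ball, Measure.addHaar_real_closedBall _ _ hb,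
    Measure.addHaar_real_closedBall _ _ ha, ← sub_mul]
  gcongr
  have pow_sub_le := (le_abs_self _).trans (abs_pow_sub_pow_le b a (Module.finrank ℝ E))
  rwa [abs_of_nonneg (sub_nonneg.2 hab), abs_of_nonneg hb, abs_of_nonneg ha, max_eq_left hab]
    at pow_sub_le

variable {d : ℕ}

theorem torusNorm_eq_norm_toLp (x : UnitAddTorus (Fin d)) :
    torusNorm x = ‖WithLp.toLp 2 fun i => ‖x i‖‖ := by
  simp [EuclideanSpace.norm_eq, torusNorm]

theorem continuous_torusNorm : Continuous (torusNorm (d := d)) := by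
  unfold torusNorm
  fun_prop

theorem abs_torusNorm_sub_torusNorm_le (x y : UnitAddTorus (Fin d)) :
    |torusNorm x - torusNorm y| ≤ √d * dist x y := by
  rw [torusNorm_eq_norm_toLp, torusNorm_eq_norm_toLp]
  refine (abs_norm_sub_norm_le _ _).trans ?_
  rw [EuclideanSpace.norm_eq, Real.sqrt_le_left (by positivity), mul_pow,
    Real.sq_sqrt (by positivity)]
  calc ∑ i, ‖‖x i‖ - ‖y i‖‖ ^ 2 ≤ ∑ _i : Fin d, dist x y ^ 2 := by
        gcongr with i
        exact (abs_norm_sub_norm_le _ _).trans ((dist_eq_norm _ _).ge.trans (dist_le_pi_dist x y i))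
    _ = d * dist x y ^ 2 := by simp

theorem torusNorm_le_sqrt (x : UnitAddTorus (Fin d)) : torusNorm x ≤ √d := by
  refine Real.sqrt_le_sqrt ?_
  calc ∑ i, ‖x i‖ ^ 2 ≤ ∑ _i : Fin d, (1 : ℝ) := by
        gcongr with i
        refine pow_le_one₀ (norm_nonneg _) ((AddCircle.norm_le_half_period 1 one_ne_zero).trans ?_)
        norm_num
    _ = d := by simp

theorem torusNorm_coe_of_mem_Ioc {z : Fin d → ℝ}
    (hz : z ∈ Set.univ.pi fun _ => Set.Ioc (-(1 / 2)) (-(1 / 2) + 1)) :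
    torusNorm (fun i => (z i : UnitAddCircle)) = ‖WithLp.toLp 2 z‖ := by
  rw [EuclideanSpace.norm_eq, torusNorm]
  congr! 3 with i
  rw [Real.norm_eq_abs, AddCircle.norm_coe_eq_abs_iff 1 one_ne_zero, abs_one, abs_le]
  constructor <;> linarith [(hz i trivial).1, (hz i trivial).2]

theorem measurePreserving_coe_unitAddTorus {ι : Type*} [Fintype ι] (a : ι → ℝ) :
    MeasurePreserving (fun (z : ι → ℝ) i => (z i : UnitAddCircle))
      (volume.restrict (Set.univ.pi fun i => Set.Ioc (a i) (a i + 1))) volume := by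
  have := measurePreserving_pi _ _ fun i => AddCircle.measurePreserving_mk 1 (a i)
  rwa [← Measure.restrict_pi_pi] at this

/-- The closed annulus of radius `t` and half-width `r` around the origin of `𝕋^d`. -/
def torusAnnulus (d : ℕ) (t r : ℝ) : Set (UnitAddTorus (Fin d)) :=
  {x | |torusNorm x - t| ≤ r}

theorem measurableSet_torusAnnulus (t r : ℝ) : MeasurableSet (torusAnnulus d t r) :=
  (isClosed_le (continuous_torusNorm.sub continuous_const).abs continuous_const).measurableSet

theorem closedBall_subset_torusAnnulus {t r ρ : ℝ} {x : UnitAddTorus (Fin d)}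
    (hx : x ∈ torusAnnulus d t r) : Metric.closedBall x ρ ⊆ torusAnnulus d t (r + √d * ρ) := by
  intro y hy
  calc |torusNorm y - t| ≤ |torusNorm y - torusNorm x| + |torusNorm x - t| := abs_sub_le _ _ _
    _ ≤ √d * ρ + r := by
        gcongr
        · exact (abs_torusNorm_sub_torusNorm_le y x).trans (by gcongr; exact hy)
        · exact hx
    _ = r + √d * ρ := add_comm _ _

theorem measureReal_torusAnnulus_le_closedBall_sdiff_ball (t r : ℝ) :
    volume.real (torusAnnulus d t r) ≤ volume.real
      (Metric.closedBall (0 : EuclideanSpace ℝ (Fin d)) (min (t + r) √d) \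
        Metric.ball 0 (max (t - r) 0)) := by
  have hA := measurableSet_torusAnnulus (d := d) t r
  have lift := measurePreserving_coe_unitAddTorus fun _ : Fin d => -(1 / 2)
  refine ENNReal.toReal_mono (measure_ne_top_of_subset Set.sdiff_subset
    measure_closedBall_lt_top.ne) ?_
  rw [← lift.measure_preimage hA.nullMeasurableSet,
    Measure.restrict_apply (lift.measurable hA),
    ← (PiLp.volume_preserving_toLp (Fin d)).measure_preimage
      (measurableSet_closedBall.diff measurableSet_ball).nullMeasurableSet]
  refine measure_mono ?_
  rintro z ⟨hz : |torusNorm _ - t| ≤ r, hz_box⟩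
  have norm_le := torusNorm_le_sqrt fun i => (z i : UnitAddCircle)
  rw [torusNorm_coe_of_mem_Ioc hz_box] at hz norm_le
  obtain ⟨hz_lower, hz_upper⟩ := abs_le.1 hz
  simp only [Set.mem_preimage, Set.mem_sdiff, mem_closedBall_zero_iff, mem_ball_zero_iff, not_lt,
    le_min_iff, max_le_iff]
  exact ⟨⟨by linarith, norm_le⟩, by linarith, norm_nonneg _⟩

theorem exists_measureReal_torusAnnulus_le (d : ℕ) [NeZero d] :
    ∃ K : ℝ, 0 < K ∧ ∀ t r : ℝ, 0 ≤ r → volume.real (torusAnnulus d t r) ≤ K * r := by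
  set V := volume.real (Metric.ball (0 : EuclideanSpace ℝ (Fin d)) 1)
  refine ⟨2 * d * √d ^ (d - 1) * V + 1, by positivity, fun t r hr => ?_⟩
  refine (measureReal_torusAnnulus_le_closedBall_sdiff_ball t r).trans ?_
  rcases le_or_gt (max (t - r) 0) (min (t + r) √d) with h | h
  · have upper_nonneg : 0 ≤ min (t + r) √d := (le_max_right _ _).trans h
    have width_le : min (t + r) √d - max (t - r) 0 ≤ 2 * r := by
      linarith [min_le_left (t + r) √d, le_max_left (t - r) 0]
    refine (measureReal_closedBall_sdiff_ball_le volume _ (le_max_right _ _) h).trans ?_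
    rw [finrank_euclideanSpace_fin]
    calc (min (t + r) √d - max (t - r) 0) * d * min (t + r) √d ^ (d - 1) * V
        ≤ 2 * r * d * √d ^ (d - 1) * V := by
          gcongr
          exact min_le_right _ _
      _ ≤ (2 * d * √d ^ (d - 1) * V + 1) * r := by linarith
  · rw [Set.sdiff_eq_empty.2 (Metric.closedBall_subset_ball h), measureReal_empty]
    positivity

end Annulus

section Counting

variable {d : ℕ}

theorem intNorm_le_of_forall_abs_le {k : Fin d → ℤ} {M : ℕ} (hk : ∀ i, |k i| ≤ M) :
    intNorm k ≤ √d * M := by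
  rw [intNorm, Real.sqrt_le_left (by positivity), mul_pow, Real.sq_sqrt (by positivity)]
  calc ∑ i, (k i : ℝ) ^ 2 ≤ ∑ _i : Fin d, (M : ℝ) ^ 2 :=
        Finset.sum_le_sum fun i _ => sq_le_sq' (by exact_mod_cast (abs_le.1 (hk i)).1)
          (by exact_mod_cast (abs_le.1 (hk i)).2)
    _ = d * M ^ 2 := by simp

theorem IsGammaUDTorus.exists_norm_sq_weylSum_le {γ : ℝ} {v : ℕ → UnitAddTorus (Fin d)}
    (hv : IsGammaUDTorus γ v) {ε : ℝ} (hε : 0 < ε) :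
    ∃ C : ℝ, 0 ≤ C ∧ ∀ N : ℕ, 1 ≤ N → ∀ (M : ℕ) (k : Fin d → ℤ), k ≠ 0 → (∀ i, |k i| ≤ M) →
      ‖weylSum (range N) v k‖ ^ 2 ≤ C * (M : ℝ) ^ ε * (N : ℝ) ^ (2 - 2 * γ) := by
  obtain ⟨C, hC, hCv⟩ := hv (ε / 2) (half_pos hε)
  refine ⟨C ^ 2 * √d ^ ε, by positivity, fun N hN M k hk hkM => ?_⟩
  have hN0 : (0 : ℝ) < N := by exact_mod_cast hN
  have intNorm_nonneg : 0 ≤ intNorm k := Real.sqrt_nonneg _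
  have normalized : (N : ℝ)⁻¹ * ‖weylSum (range N) v k‖ ≤
      C * intNorm k ^ (ε / 2) * (N : ℝ) ^ (-γ) := by
    refine le_of_eq_of_le ?_ (hCv k hk N hN)
    rw [norm_mul, norm_inv, Complex.norm_natCast]
    rfl
  have norm_le : ‖weylSum (range N) v k‖ ≤
      C * (√d * M) ^ (ε / 2) * (N : ℝ) ^ (1 - γ) :=
    calc ‖weylSum (range N) v k‖ ≤ N * (C * intNorm k ^ (ε / 2) * (N : ℝ) ^ (-γ)) :=
          (inv_mul_le_iff₀ hN0).1 normalized
      _ ≤ N * (C * (√d * M) ^ (ε / 2) * (N : ℝ) ^ (-γ)) := by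
          gcongr
          exact intNorm_le_of_forall_abs_le hkM
      _ = C * (√d * M) ^ (ε / 2) * (N : ℝ) ^ (1 - γ) := by
          rw [sub_eq_add_neg, Real.rpow_add hN0, Real.rpow_one]
          ring
  calc ‖weylSum (range N) v k‖ ^ 2
      ≤ (C * (√d * M) ^ (ε / 2) * (N : ℝ) ^ (1 - γ)) ^ 2 := by gcongr
    _ = C ^ 2 * √d ^ ε * (M : ℝ) ^ ε * (N : ℝ) ^ (2 - 2 * γ) := by
        rw [mul_pow, mul_pow, ← Real.rpow_mul_natCast (by positivity),
          ← Real.rpow_mul_natCast hN0.le, Nat.cast_two, div_mul_cancel₀ _ two_ne_zero,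
          Real.mul_rpow (by positivity) (by positivity)]
        ring_nf

theorem sqrt_mul_natCeil_pow_mul_rpow_le {K w : ℝ} (hK : 0 ≤ K) (hw : 0 < w) (hw1 : w ≤ 1)
    {ε : ℝ} (hε : 0 ≤ ε) (d : ℕ) :
    √(K * w * (⌈w⁻¹⌉₊ : ℝ) ^ d) * (⌈w⁻¹⌉₊ : ℝ) ^ ε ≤
      √(K * 2 ^ d) * 2 ^ ε * w ^ (-(((d : ℝ) - 1) / 2 + ε)) := by
  have ceil_le : (⌈w⁻¹⌉₊ : ℝ) ≤ 2 * w⁻¹ :=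
    Nat.ceil_le_two_mul (by linarith [one_le_inv_iff₀.2 ⟨hw, hw1⟩])
  have sqrt_eq : √(w ^ (1 - d : ℝ)) = w ^ (-(((d : ℝ) - 1) / 2)) := by
    rw [Real.sqrt_eq_rpow, ← Real.rpow_mul hw.le]
    ring_nf
  calc √(K * w * (⌈w⁻¹⌉₊ : ℝ) ^ d) * (⌈w⁻¹⌉₊ : ℝ) ^ ε
      ≤ √(K * w * (2 * w⁻¹) ^ d) * (2 * w⁻¹) ^ ε := by gcongr
    _ = √(K * 2 ^ d * w ^ (1 - d : ℝ)) * (2 ^ ε * w ^ (-ε)) := by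
        rw [Real.mul_rpow two_pos.le (inv_nonneg.2 hw.le), Real.inv_rpow hw.le,
          ← Real.rpow_neg hw.le, Real.rpow_sub hw, Real.rpow_one, Real.rpow_natCast, mul_pow,
          inv_pow]
        ring_nf
    _ = √(K * 2 ^ d) * 2 ^ ε * w ^ (-(((d : ℝ) - 1) / 2 + ε)) := by
        rw [Real.sqrt_mul (by positivity), sqrt_eq, neg_add, Real.rpow_add hw]
        ring

open scoped Classical in
theorem exists_card_sub_mem_torusAnnulus_le_of_norm_sq_weylSum_le (d : ℕ) [NeZero d] :
    ∃ K : ℝ, 0 < K ∧ ∀ {α : Type*} (s : Finset α) (v : α → UnitAddTorus (Fin d)) (t : ℝ)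
      {w : ℝ} {M : ℕ}, 0 < M → (M : ℝ)⁻¹ ≤ w → ∀ {L : ℝ}, 0 ≤ L →
      (∀ k : Fin d → ℤ, k ≠ 0 → (∀ i, |k i| ≤ M) → ‖weylSum s v k‖ ^ 2 ≤ L) →
      (#{p ∈ s ×ˢ s | v p.1 - v p.2 ∈ torusAnnulus d t w} : ℝ) ≤
        12 ^ d * (K * w * #s ^ 2 + √(K * w * M ^ d) * L) := by
  obtain ⟨K, hK, volume_le⟩ := exists_measureReal_torusAnnulus_le d
  refine ⟨K * (1 + √d), by positivity, fun s v t w M hM hw L hL weylSum_le => ?_⟩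
  have hw0 : 0 < w := (by positivity : 0 < (M : ℝ)⁻¹).trans_le hw
  set A := torusAnnulus d t (w + √d * (1 / (6 * M)))
  have volume_A_le : volume.real A ≤ K * (1 + √d) * w :=
    have radius_le : 1 / (6 * M : ℝ) ≤ w := by
      rw [one_div, mul_inv]
      linarith
    calc volume.real A ≤ K * (w + √d * (1 / (6 * M))) := volume_le _ _ (by positivity)
      _ ≤ K * (w + √d * w) := by gcongr
      _ = K * (1 + √d) * w := by ring
  refine (card_le_of_closedBall_sub_subset s v hM (Finset.filter_subset _ _)
    (fun p hp => closedBall_subset_torusAnnulus (Finset.mem_filter.1 hp).2) hL weylSum_le).trans ?_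
  rw [Fintype.card_fin]
  gcongr

open scoped Classical in
theorem IsGammaUDTorus.exists_card_sub_mem_torusAnnulus_le [NeZero d] {γ : ℝ}
    {v : ℕ → UnitAddTorus (Fin d)} (hv : IsGammaUDTorus γ v) {ε : ℝ} (hε : 0 < ε) :
    ∃ C : ℝ, 0 < C ∧ ∀ t w : ℝ, 0 < w → w ≤ 1 → ∀ N : ℕ, 1 ≤ N →
      (#{p ∈ range N ×ˢ range N | v p.1 - v p.2 ∈ torusAnnulus d t w} : ℝ) ≤
        C * (w * N ^ 2 + w ^ (-(((d : ℝ) - 1) / 2 + ε)) * (N : ℝ) ^ (2 - 2 * γ)) := by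
  obtain ⟨K, hK, count_le⟩ := exists_card_sub_mem_torusAnnulus_le_of_norm_sq_weylSum_le d
  obtain ⟨D, hD, weylSum_le⟩ := hv.exists_norm_sq_weylSum_le hε
  set D₁ := √(K * 2 ^ d) * 2 ^ ε * D
  refine ⟨12 ^ d * (K + D₁), by positivity, fun t w hw hw1 N hN => ?_⟩
  set M := ⌈w⁻¹⌉₊
  have hM : 0 < M := Nat.ceil_pos.2 (inv_pos.2 hw)
  have inv_M_le : (M : ℝ)⁻¹ ≤ w := inv_le_of_inv_le₀ hw (Nat.le_ceil _)
  have count := count_le (range N) v t hM inv_M_le (by positivity) (weylSum_le N hN M)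
  rw [card_range] at count
  calc _ ≤ _ := count
    _ = 12 ^ d * (K * w * N ^ 2 + D * (√(K * w * M ^ d) * M ^ ε) * (N : ℝ) ^ (2 - 2 * γ)) := by
        ring
    _ ≤ 12 ^ d * (K * w * N ^ 2 + D * (√(K * 2 ^ d) * 2 ^ ε * w ^ (-(((d : ℝ) - 1) / 2 + ε))) *
          (N : ℝ) ^ (2 - 2 * γ)) := by
        gcongr 12 ^ d * (_ + D * ?_ * _)
        exact sqrt_mul_natCeil_pow_mul_rpow_le (by positivity) hw hw1 hε.le d
    _ = 12 ^ d * (K * (w * N ^ 2) +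
          D₁ * (w ^ (-(((d : ℝ) - 1) / 2 + ε)) * (N : ℝ) ^ (2 - 2 * γ))) := by ring
    _ ≤ 12 ^ d * ((K + D₁) * (w * N ^ 2) +
          (K + D₁) * (w ^ (-(((d : ℝ) - 1) / 2 + ε)) * (N : ℝ) ^ (2 - 2 * γ))) := by
        gcongr 12 ^ d * (?_ * _ + ?_ * _)
        · exact le_add_of_nonneg_right (by positivity)
        · exact le_add_of_nonneg_left (by positivity)
    _ = _ := by ring

end Counting

open scoped Classical in
theorem stmt10_general {d : ℕ} [NeZero d] {γ : ℝ} (hγ : 0 < γ) {v : ℕ → UnitAddTorus (Fin d)}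
    (hv : IsGammaUDTorus γ v) {ε : ℝ} (hε : 0 < ε) :
    ∃ C : ℝ, 0 < C ∧ ∀ t : ℝ, ∀ N : ℕ, 1 ≤ N →
      (#{p ∈ range N ×ˢ range N | torusNorm (v p.1 - v p.2) = t} : ℝ) ≤
        C * (N : ℝ) ^ (2 - 4 * γ / (d + 1) + ε) := by
  set a : ℝ := 4 * γ / (d + 1)
  have ha : 0 < a := by positivity
  obtain ⟨C, hC, annulus_count⟩ := hv.exists_card_sub_mem_torusAnnulus_le (div_pos hε ha)
  refine ⟨C * 2, by positivity, fun t N hN => ?_⟩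
  have hN1 : (1 : ℝ) ≤ N := by exact_mod_cast hN
  have hN0 : (0 : ℝ) < N := one_pos.trans_le hN1
  set w : ℝ := (N : ℝ) ^ (-a)
  have hw : 0 < w := Real.rpow_pos_of_pos hN0 _
  have diagonal_le : w * N ^ 2 ≤ (N : ℝ) ^ (2 - a + ε) := by
    rw [← Real.rpow_ofNat, ← Real.rpow_add hN0]
    exact Real.rpow_le_rpow_of_exponent_le hN1 (by linarith)
  have off_diagonal_eq : w ^ (-(((d : ℝ) - 1) / 2 + ε / a)) * (N : ℝ) ^ (2 - 2 * γ) =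
      (N : ℝ) ^ (2 - a + ε) := by
    rw [← Real.rpow_mul hN0.le, ← Real.rpow_add hN0]
    congr 1
    field
  calc _ ≤ (#{p ∈ range N ×ˢ range N | v p.1 - v p.2 ∈ torusAnnulus d t w} : ℝ) := by
        gcongr with p _
        rintro rfl
        simp [torusAnnulus, hw.le]
    _ ≤ C * (w * N ^ 2 + w ^ (-(((d : ℝ) - 1) / 2 + ε / a)) * (N : ℝ) ^ (2 - 2 * γ)) :=
        annulus_count t w hw (Real.rpow_le_one_of_one_le_of_nonpos hN1 (neg_nonpos.2 ha.le)) N hN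
    _ ≤ C * ((N : ℝ) ^ (2 - a + ε) + (N : ℝ) ^ (2 - a + ε)) := by
        rw [off_diagonal_eq]
        gcongr
    _ = C * 2 * (N : ℝ) ^ (2 - a + ε) := by ring

open scoped Classical in
/-- For a `1/2`-uniformly distributed sequence in `𝕋^d`, `d ≥ 2`, and a fixed distance
`1/100 ≤ t < 1/2`, the number of pairs at toral distance exactly `t` is at most
`C_ε N^{2 - 2/(d+1) + ε}`. -/
theorem stmt10 (d : ℕ) (hd : 2 ≤ d)
    (v : ℕ → Fin d → AddCircle (1:ℝ)) (hUD : IsGammaUDTorus (1/2) v)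
    (t : ℝ) (ht : 1/100 ≤ t) (ht2 : t < 1/2) :
    ∀ ε : ℝ, 0 < ε → ∃ C : ℝ, 0 < C ∧ ∀ N : ℕ, 1 ≤ N →
      ((((Finset.range N) ×ˢ (Finset.range N)).filter
          (fun p => torusNorm (v p.1 - v p.2) = t)).card : ℝ)
        ≤ C * (N : ℝ) ^ (2 - 2/(d+1) + ε) := by
  intro ε hε
  have : NeZero d := ⟨by omega⟩
  obtain ⟨C, hC, count⟩ := stmt10_general one_half_pos hUD hε
  exact ⟨C, hC, fun N hN => by convert count t N hN using 4; ring⟩
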